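/- For every choice of control gains a, b ∈ ℝ and every delay τ ∈ ℝ, the closed-loop characteristic function f(s) = det(s·I₄ − A − e^{−τs}·A_d) satisfies f(0) = det(−A_u); in particular s = 0 is a characteristic root of the controlled system if and only if det K = 0, so the delayed feedback control can neither create nor remove a characteristic root at the origin (it cannot stabilize pitch divergence). -/

import Mathlib

/-!
At `s = 0` the delay factor `exp (-τ s)` equals `1`, so `f(0) = det (-(A + A_d))`, and a feedback
proportional to the difference between the current and the delayed state cancels from `A + A_d`.
What remains is the uncontrolled state matrix, for which `det (-A_u) = det (M⁻¹ K)`.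
-/

section StateMatrix

variable {n R : Type*} [Fintype n] [DecidableEq n] [CommRing R]

theorem det_fromBlocks_zero_neg_one (X Y : Matrix n n R) :
    (Matrix.fromBlocks 0 (-1) X Y).det = X.det := by
  let columnOp : Matrix (n ⊕ n) (n ⊕ n) R := Matrix.fromBlocks 1 0 (-1) 1
  have mul_columnOp : Matrix.fromBlocks 0 (-1) X Y * columnOp =
      Matrix.fromBlocks (1 : Matrix n n R) (-1) (X - Y) Y := by
    simp [columnOp, Matrix.fromBlocks_multiply, sub_eq_add_neg]
  calc (Matrix.fromBlocks 0 (-1) X Y).det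
      = (Matrix.fromBlocks 0 (-1) X Y * columnOp).det := by
        rw [Matrix.det_mul, Matrix.det_fromBlocks_zero₁₂, Matrix.det_one, mul_one, mul_one]
    _ = (Y - (X - Y) * (-1)).det := by rw [mul_columnOp, Matrix.det_fromBlocks_one₁₁]
    _ = X.det := by simp

/-- The matrix `A` for which the mechanical system `M ẍ + C ẋ + K x = 0` becomes the first-order
system `ẏ = A y` in the state `y = (x, ẋ)`. It has this meaning only for invertible `M`, since
`M⁻¹ = 0` otherwise. -/
noncomputable def secondOrderStateMatrix (M C K : Matrix n n R) : Matrix (n ⊕ n) (n ⊕ n) R :=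
  Matrix.fromBlocks 0 1 (-(M⁻¹ * K)) (-(M⁻¹ * C))

theorem det_neg_secondOrderStateMatrix (M C K : Matrix n n R) :
    (-secondOrderStateMatrix M C K).det = M⁻¹.det * K.det := by
  rw [secondOrderStateMatrix, Matrix.fromBlocks_neg, neg_zero, neg_neg,
    det_fromBlocks_zero_neg_one, Matrix.det_mul]

theorem det_neg_secondOrderStateMatrix_eq_zero_iff {M : Matrix n n R} (hM : IsUnit M.det)
    (C K : Matrix n n R) : (-secondOrderStateMatrix M C K).det = 0 ↔ K.det = 0 := by
  rw [det_neg_secondOrderStateMatrix, (M.isUnit_nonsing_inv_det hM).mul_right_eq_zero]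

end StateMatrix

section DelaySystem

variable {m : Type*} [Fintype m] [DecidableEq m]

/-- The characteristic function of the delay system `ẋ(t) = A x(t) + A_d x(t - τ)`. -/
noncomputable def delayCharFun (A Ad : Matrix m m ℂ) (τ : ℝ) (s : ℂ) : ℂ :=
  (s • (1 : Matrix m m ℂ) - A - Complex.exp (-((τ : ℂ) * s)) • Ad).det

theorem delayCharFun_zero (A Ad : Matrix m m ℂ) (τ : ℝ) :
    delayCharFun A Ad τ 0 = (-(A + Ad)).det := by
  rw [delayCharFun, mul_zero, neg_zero, Complex.exp_zero, zero_smul, one_smul, zero_sub, neg_add']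

end DelaySystem

theorem det_neg_map {m R S : Type*} [Fintype m] [DecidableEq m] [CommRing R] [CommRing S]
    (φ : R →+* S) (X : Matrix m m R) : (-(X.map φ)).det = φ (-X).det := by
  rw [RingHom.map_det, map_neg, RingHom.mapMatrix_apply]

theorem delayed_feedback_cannot_stabilize_pitch_divergence_general
    {n 𝕜 : Type*} [Fintype n] [DecidableEq n] [Field 𝕜] [Algebra 𝕜 ℂ]
    {M C K : Matrix n n 𝕜} (hM : IsUnit M.det) {A Ad : Matrix (n ⊕ n) (n ⊕ n) 𝕜}
    (hsum : A + Ad = secondOrderStateMatrix M C K) (τ : ℝ) :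
    delayCharFun (A.map (algebraMap 𝕜 ℂ)) (Ad.map (algebraMap 𝕜 ℂ)) τ 0 =
        (-((secondOrderStateMatrix M C K).map (algebraMap 𝕜 ℂ))).det ∧
      (delayCharFun (A.map (algebraMap 𝕜 ℂ)) (Ad.map (algebraMap 𝕜 ℂ)) τ 0 = 0 ↔
        K.det = 0) := by
  have char_zero : delayCharFun (A.map (algebraMap 𝕜 ℂ)) (Ad.map (algebraMap 𝕜 ℂ)) τ 0 =
      (-((secondOrderStateMatrix M C K).map (algebraMap 𝕜 ℂ))).det := by
    rw [delayCharFun_zero, ← Matrix.map_add _ (map_add (algebraMap 𝕜 ℂ)), hsum]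
  refine ⟨char_zero, ?_⟩
  rw [char_zero, det_neg_map, map_eq_zero, det_neg_secondOrderStateMatrix_eq_zero_iff hM]

/-- For every choice of the gains `a, b` and every delay `τ`, the closed-loop characteristic
function `f(s) = det(s·I₄ − A − e^{−τs}·A_d)` satisfies `f(0) = det(−A_u)`; in particular
`s = 0` is a characteristic root of the controlled system iff `det K = 0`, so the delayed
feedback can neither create nor remove a characteristic root at the origin. -/
theorem delayed_feedback_cannot_stabilize_pitch_divergence
    (γ lam₁ rg ch σ ν₁ : ℝ)
    (hγ : 0 < γ) (hlam : 0 < lam₁) (hr : 0 < rg) (hc : 0 < ch) (hσ : 0 < σ) (hν : 0 < ν₁)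
    (M C K : Matrix (Fin 2) (Fin 2) ℝ)
    (hM : M = !![1, -12 * rg * σ / ch; 0, 1])
    (hC : C = !![γ / 8, 0; 0, γ / 8])
    (hK : K = !![ν₁ ^ 2, -12 * rg * σ / ch; -γ / 8, lam₁ ^ 2])
    (Au : Matrix (Fin 2 ⊕ Fin 2) (Fin 2 ⊕ Fin 2) ℝ)
    (hAu : Au = Matrix.fromBlocks 0 1 (-(M⁻¹ * K)) (-(M⁻¹ * C)))
    (a b τ : ℝ)
    (E F : Matrix (Fin 2) (Fin 2) ℝ)
    (hE : E = !![0, 3777 * ν₁ ^ 2 * a; 0, 0])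
    (hF : F = !![0, 3777 * ν₁ ^ 2 * b; 0, 0])
    (A Ad : Matrix (Fin 2 ⊕ Fin 2) (Fin 2 ⊕ Fin 2) ℝ)
    (hA : A = Matrix.fromBlocks 0 1 (-(M⁻¹ * K) + E) (-(M⁻¹ * C) + F))
    (hAd : Ad = Matrix.fromBlocks 0 0 (-E) (-F))
    (f : ℂ → ℂ)
    (hf : ∀ s : ℂ, f s =
      (s • (1 : Matrix (Fin 2 ⊕ Fin 2) (Fin 2 ⊕ Fin 2) ℂ) - A.map Complex.ofReal -
        Complex.exp (-((τ : ℂ) * s)) • Ad.map Complex.ofReal).det) :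
    f 0 = (-(Au.map Complex.ofReal)).det ∧ (f 0 = 0 ↔ K.det = 0) := by
  have hMdet : IsUnit M.det := by simp [hM, Matrix.det_fin_two]
  have hsum : A + Ad = secondOrderStateMatrix M C K := by
    simp [hA, hAd, secondOrderStateMatrix, Matrix.fromBlocks_add]
  rw [hf 0, hAu]
  exact delayed_feedback_cannot_stabilize_pitch_divergence_general hMdet hsum τ
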